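/- There exists a universal constant C > 0 such that the following holds. Let n, t ∈ ℕ with n ≥ 2 and t ≥ 2, and let Σ be an n×n positive definite real matrix. Then Σ has a (t, C·t^{3/2}·log n)-ℓ1-representation of size at most C·n^{t−1/2}, all of whose elements are t-sparse. -/

import Mathlib

open Matrix MeasureTheory ProbabilityTheory
open scoped BigOperators ENNReal

noncomputable section

/-- `v` has at most `t` nonzero coordinates. -/
def SparseVec {k : ℕ} (t : ℕ) (v : Fin k → ℝ) : Prop := {i | v i ≠ 0}.ncard ≤ t

/-- ⟨x,y⟩_Σ := xᵀ Σ y. -/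
def innerSigma {k : ℕ} (A : Matrix (Fin k) (Fin k) ℝ) (x y : Fin k → ℝ) : ℝ := x ⬝ᵥ (A *ᵥ y)

/-- ‖x‖_Σ := √(xᵀ Σ x). -/
def normSigma {k : ℕ} (A : Matrix (Fin k) (Fin k) ℝ) (x : Fin k → ℝ) : ℝ :=
  Real.sqrt (innerSigma A x x)

/-- Euclidean norm on ℝ^k. -/
def l2norm {k : ℕ} (v : Fin k → ℝ) : ℝ := Real.sqrt (∑ i, v i ^ 2)

/-- ℓ1 norm on ℝ^k. -/
def l1norm {k : ℕ} (v : Fin k → ℝ) : ℝ := ∑ i, |v i|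

/-- `D` is a `(t,B)`-ℓ1-representation for `A`: every `t`-sparse `v` can be written as a
linear combination of the `D i` with ℓ1 cost (weighted by Σ-norms) at most `B·‖v‖_Σ`. -/
def IsL1Rep {k : ℕ} (t : ℕ) (B : ℝ) (A : Matrix (Fin k) (Fin k) ℝ) {N : ℕ}
    (D : Fin N → Fin k → ℝ) : Prop :=
  ∀ v : Fin k → ℝ, SparseVec t v → ∃ a : Fin N → ℝ,
    v = ∑ i, a i • D i ∧ ∑ i, |a i| * normSigma A (D i) ≤ B * normSigma A v

/-! ### A `K_{2,2}`-free bipartite spanner -/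

/-- Greedy bipartite spanner. -/
lemma exists_spanner {ι : Type*} [Fintype ι] [DecidableEq ι] (w : ι × ι → ℝ) :
    ∃ E : Finset (ι × ι),
      (∀ i i' j j', i ≠ i' → j ≠ j' → (i, j) ∈ E → (i, j') ∈ E → (i', j) ∈ E →
        (i', j') ∈ E → False) ∧
      ∀ i j, (i, j) ∈ E ∨ ∃ i' j', (i, j') ∈ E ∧ (i', j') ∈ E ∧ (i', j) ∈ E ∧
        w (i, j') ≤ w (i, j) ∧ w (i', j') ≤ w (i, j) ∧ w (i', j) ≤ w (i, j) := by
  suffices h : ∀ s : Finset (ι × ι), ∃ E : Finset (ι × ι), E ⊆ s ∧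
      (∀ i i' j j', i ≠ i' → j ≠ j' → (i, j) ∈ E → (i, j') ∈ E → (i', j) ∈ E →
        (i', j') ∈ E → False) ∧
      ∀ i j, (i, j) ∈ s → ((i, j) ∈ E ∨ ∃ i' j', (i, j') ∈ E ∧ (i', j') ∈ E ∧ (i', j) ∈ E ∧
        w (i, j') ≤ w (i, j) ∧ w (i', j') ≤ w (i, j) ∧ w (i', j) ≤ w (i, j)) by
    obtain ⟨E, -, h1, h2⟩ := h Finset.univ
    exact ⟨E, h1, fun i j => h2 i j (Finset.mem_univ _)⟩
  intro s
  induction s using Finset.induction_on_max_value w with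
  | empty => exact ⟨∅, by simp, by simp, by simp⟩
  | insert e s he hmax ih =>
    obtain ⟨E, hEs, h1, h2⟩ := ih
    obtain ⟨p, q⟩ := e
    by_cases hp : ∃ i' j', (p, j') ∈ E ∧ (i', j') ∈ E ∧ (i', q) ∈ E
    · refine ⟨E, hEs.trans (Finset.subset_insert _ _), h1, ?_⟩
      intro i j hij
      rcases Finset.mem_insert.1 hij with h | h
      · obtain ⟨i', j', ha, hb, hc⟩ := hp
        obtain ⟨rfl, rfl⟩ := Prod.mk.inj h
        exact Or.inr ⟨i', j', ha, hb, hc, hmax _ (hEs ha), hmax _ (hEs hb), hmax _ (hEs hc)⟩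
      · exact h2 i j h
    · refine ⟨insert (p, q) E, Finset.insert_subset_insert _ hEs, ?_, ?_⟩
      · intro i i' j j' hi hj ha hb hc hd
        simp only [Finset.mem_insert, Prod.mk.injEq] at ha hb hc hd
        push Not at hp
        rcases ha with ⟨rfl, rfl⟩ | ha
        · exact hp i' j' (by grind) (by grind) (by grind)
        rcases hb with ⟨rfl, rfl⟩ | hb
        · exact hp i' j (by grind) (by grind) (by grind)
        rcases hc with ⟨rfl, rfl⟩ | hc
        · exact hp i j' (by grind) (by grind) (by grind)
        rcases hd with ⟨rfl, rfl⟩ | hd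
        · exact hp i j (by grind) (by grind) (by grind)
        exact h1 i i' j j' hi hj ha hb hc hd
      · intro i j hij
        rcases Finset.mem_insert.1 hij with h | h
        · exact Or.inl (by rw [h]; exact Finset.mem_insert_self _ _)
        · rcases h2 i j h with h | ⟨i', j', ha, hb, hc, hd⟩
          · exact Or.inl (Finset.mem_insert_of_mem h)
          · exact Or.inr ⟨i', j', Finset.mem_insert_of_mem ha, Finset.mem_insert_of_mem hb,
              Finset.mem_insert_of_mem hc, hd⟩

/-- `K_{2,2}`-free bipartite graphs have few edges. -/
lemma card_K22_free {n : ℕ} (E : Finset (Fin n × Fin n))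
    (h : ∀ i i' j j', i ≠ i' → j ≠ j' → (i, j) ∈ E → (i, j') ∈ E → (i', j) ∈ E →
        (i', j') ∈ E → False) :
    (E.card : ℝ) ≤ 2 * (n * Real.sqrt n) := by
  classical
  set d : Fin n → ℕ := fun i => (Finset.univ.filter fun j => (i, j) ∈ E).card with hd
  have hsum : E.card = ∑ i, d i := by
    have : E = (Finset.univ.sigma
        (fun i => Finset.univ.filter fun j : Fin n => (i, j) ∈ E)).map (Equiv.sigmaEquivProd (Fin n) (Fin n)).toEmbedding := by
      ext ⟨a, b⟩
      simp [Equiv.sigmaEquivProd]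
    rw [this, Finset.card_map, Finset.card_sigma]
  have hsq : ∑ i, d i * d i ≤ n * n + ∑ i, d i := by
    have h1 : ∀ i, d i * d i = ((Finset.univ.filter fun j => (i, j) ∈ E).offDiag).card + d i := by
      intro i
      rw [Finset.offDiag_card]
      have : d i ≤ d i * d i := Nat.le_mul_self _
      simp only [hd] at this ⊢
      omega
    rw [Finset.sum_congr rfl fun i _ => h1 i, Finset.sum_add_distrib]
    gcongr
    rw [← Finset.card_biUnion]
    · refine (Finset.card_le_univ _).trans ?_
      simp
    · intro i _ i' _ hii
      rw [Function.onFun, Finset.disjoint_left]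
      rintro ⟨j, j'⟩ ha hb
      simp only [Finset.mem_offDiag, Finset.mem_filter, Finset.mem_univ, true_and] at ha hb
      exact h i i' j j' hii ha.2.2 ha.1 ha.2.1 hb.1 hb.2.1
  have hcs : (∑ i, d i) ^ 2 ≤ n * ∑ i, d i ^ 2 := by
    have := sq_sum_le_card_mul_sum_sq (s := (Finset.univ : Finset (Fin n))) (f := d)
    simpa using this
  rw [← hsum] at hcs hsq
  have key : E.card ^ 2 ≤ n * (n * n + E.card) := by
    refine hcs.trans ?_
    gcongr
    simpa [pow_two] using hsq
  have keyR : (E.card : ℝ) ^ 2 ≤ n * (n * n + E.card) := by exact_mod_cast key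
  by_contra! hlt
  rcases Nat.eq_zero_or_pos n with h0 | h0
  · subst h0
    simp only [Nat.cast_zero, zero_mul, mul_zero] at hlt keyR
    nlinarith
  have hn1 : (1 : ℝ) ≤ n := by exact_mod_cast h0
  set s := Real.sqrt n with hs
  have hs2 : s * s = n := Real.mul_self_sqrt (by positivity)
  have hs1 : 1 ≤ s := by rw [hs]; exact Real.one_le_sqrt.2 hn1
  have h3 : (n : ℝ) ≤ n * s := by nlinarith
  have h4 : (n * s) * (n * s) = (n : ℝ) * (n * n) := by rw [← hs2]; ring
  have h5 : (0 : ℝ) < n * s := by positivity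
  nlinarith

/-! ### Representations -/

section RepSection
variable {H : Type*} [NormedAddCommGroup H] [InnerProductSpace ℝ H]

/-- `v` has a representation over `S` with cost at most `b`. -/
def L1R (S : Finset H) (v : H) (b : ℝ) : Prop :=
  ∃ a : H → ℝ, v = ∑ d ∈ S, a d • d ∧ ∑ d ∈ S, |a d| * ‖d‖ ≤ b

lemma L1R.add {S : Finset H} {v w : H} {b c : ℝ} (h1 : L1R S v b) (h2 : L1R S w c) :
    L1R S (v + w) (b + c) := by
  obtain ⟨a, rfl, ha⟩ := h1
  obtain ⟨a', rfl, ha'⟩ := h2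
  refine ⟨a + a', ?_, ?_⟩
  · simp [add_smul, Finset.sum_add_distrib]
  · refine le_trans ?_ (add_le_add ha ha')
    rw [← Finset.sum_add_distrib]
    refine Finset.sum_le_sum fun d _ => ?_
    rw [← add_mul]
    exact mul_le_mul_of_nonneg_right (abs_add_le _ _) (norm_nonneg _)

lemma L1R.smul {S : Finset H} {v : H} {b : ℝ} (h1 : L1R S v b) (c : ℝ) :
    L1R S (c • v) (|c| * b) := by
  obtain ⟨a, rfl, ha⟩ := h1
  refine ⟨c • a, ?_, ?_⟩
  · simp [Finset.smul_sum, mul_smul]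
  · refine le_trans (le_of_eq ?_) (mul_le_mul_of_nonneg_left ha (abs_nonneg c))
    rw [Finset.mul_sum]
    exact Finset.sum_congr rfl fun d _ => by simp [abs_mul, mul_assoc]

lemma L1R.mono {S : Finset H} {v : H} {b c : ℝ} (h1 : L1R S v b) (h : b ≤ c) : L1R S v c := by
  obtain ⟨a, h, ha⟩ := h1
  exact ⟨a, h, ha.trans ‹_›⟩

lemma L1R.zero (S : Finset H) : L1R S 0 0 := ⟨0, by simp, by simp⟩

lemma L1R.single {S : Finset H} {v : H} (h : v ∈ S) : L1R S v ‖v‖ := by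
  classical
  refine ⟨fun d => if d = v then 1 else 0, ?_, ?_⟩
  · simp [h]
  · rw [Finset.sum_eq_single v]
    · simp
    · intro b _ hb; simp [hb]
    · intro h'; exact absurd h h'

lemma L1R.subset {S T : Finset H} {v : H} {b : ℝ} (h1 : L1R S v b) (h : S ⊆ T) : L1R T v b := by
  classical
  obtain ⟨a, rfl, ha⟩ := h1
  refine ⟨fun d => if d ∈ S then a d else 0, ?_, ?_⟩
  · rw [← Finset.sum_subset h]
    · exact Finset.sum_congr rfl fun d hd => by simp [hd]
    · intro d _ hd; simp [hd]
  · refine le_trans (le_of_eq ?_) ha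
    symm
    rw [← Finset.sum_subset h]
    · exact Finset.sum_congr rfl fun d hd => by simp [hd]
    · intro d _ hd; simp [hd]

lemma L1R.sum {κ : Type*} (s : Finset κ) {S : Finset H} {v : κ → H} {b : κ → ℝ}
    (h : ∀ i ∈ s, L1R S (v i) (b i)) : L1R S (∑ i ∈ s, v i) (∑ i ∈ s, b i) := by
  classical
  induction s using Finset.induction_on with
  | empty => simpa using L1R.zero S
  | insert i s hi ih =>
    rw [Finset.sum_insert hi, Finset.sum_insert hi]
    exact (h i (Finset.mem_insert_self _ _)).add
      (ih fun j hj => h j (Finset.mem_insert_of_mem hj))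

/-- A spanner for the differences `f i - g j`. -/
lemma exists_diff_dict {n : ℕ} (f g : Fin n → H) :
    ∃ S : Finset H, (∀ d ∈ S, ∃ i j, d = f i - g j) ∧
      (∀ i j, L1R S (f i - g j) (3 * ‖f i - g j‖)) ∧
      (S.card : ℝ) ≤ 2 * (n * Real.sqrt n) := by
  classical
  obtain ⟨E, h1, h2⟩ := exists_spanner (fun p : Fin n × Fin n => ‖f p.1 - g p.2‖)
  have hmem : ∀ i j, (i, j) ∈ E → f i - g j ∈ E.image (fun p => f p.1 - g p.2) :=
    fun i j h => Finset.mem_image.2 ⟨(i, j), h, rfl⟩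
  refine ⟨E.image fun p => f p.1 - g p.2, ?_, ?_, ?_⟩
  · intro d hd
    obtain ⟨p, -, rfl⟩ := Finset.mem_image.1 hd
    exact ⟨_, _, rfl⟩
  · intro i j
    rcases h2 i j with h | ⟨i', j', ha, hb, hc, la, lb, lc⟩
    · exact (L1R.single (hmem i j h)).mono (by linarith [norm_nonneg (f i - g j)])
    · have := ((L1R.single (hmem _ _ ha)).add ((L1R.single (hmem _ _ hb)).smul (-1))).add
        (L1R.single (hmem _ _ hc))
      have e : f i - g j' + (-1 : ℝ) • (f i' - g j') + (f i' - g j) = f i - g j := by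
        rw [neg_smul, one_smul]; abel
      rw [e] at this
      refine this.mono ?_
      simp only [abs_neg, abs_one, one_mul] at la lb lc ⊢
      linarith
  · refine le_trans ?_ (card_K22_free E h1)
    exact_mod_cast Finset.card_image_le

lemma two_rep {S : Finset H} {u w : H} (hu : ‖u‖ = 1) (hw : ‖w‖ = 1) (hS : L1R S u 1) (hS' : L1R S w 1)
    (hr : L1R S (u - w) (3 * ‖u - w‖)) {a b : ℝ} (ha : 0 ≤ a) (hb : 0 ≤ b) :
    L1R S (a • u - b • w) (7 * ‖a • u - b • w‖) := by
  have hab : |a - b| ≤ ‖a • u - b • w‖ := by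
    have := abs_norm_sub_norm_le (a • u) (b • w)
    simpa [norm_smul, hu, hw, abs_of_nonneg ha, abs_of_nonneg hb] using this
  rcases le_total b a with h | h
  · have e : a • u - b • w = (a - b) • u + b • (u - w) := by module
    have h2 : b * ‖u - w‖ ≤ 2 * ‖a • u - b • w‖ := by
      have e2 : b • (u - w) = (a • u - b • w) - (a - b) • u := by module
      have := norm_sub_le (a • u - b • w) ((a - b) • u)
      rw [← e2, norm_smul, norm_smul, hu, Real.norm_eq_abs, Real.norm_eq_abs,
        abs_of_nonneg hb] at this
      linarith
    have := (hS.smul (a - b)).add (hr.smul b)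
    rw [← e] at this
    refine this.mono ?_
    rw [abs_of_nonneg hb]
    linarith
  · have e : a • u - b • w = (a - b) • w + a • (u - w) := by module
    have h2 : a * ‖u - w‖ ≤ 2 * ‖a • u - b • w‖ := by
      have e2 : a • (u - w) = (a • u - b • w) - (a - b) • w := by module
      have := norm_sub_le (a • u - b • w) ((a - b) • w)
      rw [← e2, norm_smul, norm_smul, hw, Real.norm_eq_abs, Real.norm_eq_abs,
        abs_of_nonneg ha] at this
      linarith
    have := (hS'.smul (a - b)).add (hr.smul a)
    rw [← e] at this
    refine this.mono ?_
    rw [abs_of_nonneg ha]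
    linarith

/-- Dictionary for two-term combinations. -/
lemma exists_pair_dict {n : ℕ} (y : Fin n → H) :
    ∃ S : Finset H, (∀ d ∈ S, ∃ i j, d ∈ Submodule.span ℝ {y i, y j}) ∧
      (∀ i j, ∀ a b : ℝ, L1R S (a • y i + b • y j) (7 * ‖a • y i + b • y j‖)) ∧
      (S.card : ℝ) ≤ n + 4 * (n * Real.sqrt n) := by
  classical
  set u : Fin n → H := fun i => ‖y i‖⁻¹ • y i with hu
  obtain ⟨S1, m1, r1, c1⟩ := exists_diff_dict u u
  obtain ⟨S2, m2, r2, c2⟩ := exists_diff_dict u (fun i => - u i)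
  set S0 := Finset.univ.image u with hS0
  have hyu : ∀ i, y i = ‖y i‖ • u i := by
    intro i
    by_cases h : y i = 0
    · simp [h]
    · simp only [hu]
      rw [smul_smul, mul_inv_cancel₀ (norm_ne_zero_iff.2 h), one_smul]
  have hnu : ∀ i, y i ≠ 0 → ‖u i‖ = 1 := by
    intro i h
    simp only [hu]
    rw [norm_smul, norm_inv, norm_norm, inv_mul_cancel₀ (norm_ne_zero_iff.2 h)]
  have hus : ∀ i j, u i ∈ Submodule.span ℝ {y i, y j} := fun i j =>
    Submodule.smul_mem _ _ (Submodule.subset_span (by simp))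
  have hus' : ∀ i j, u j ∈ Submodule.span ℝ {y i, y j} := fun i j =>
    Submodule.smul_mem _ _ (Submodule.subset_span (by simp))
  set SS := (Finset.univ.image u) ∪ (S1 ∪ S2) with hSS
  have hmem : ∀ i, u i ∈ SS := fun i =>
    Finset.mem_union_left _ (Finset.mem_image_of_mem _ (Finset.mem_univ _))
  have hs1 : S1 ⊆ SS := fun d hd => by simp [hSS, hd]
  have hs2 : S2 ⊆ SS := fun d hd => by simp [hSS, hd]
  have single : ∀ i (a : ℝ), L1R SS (a • y i) ‖a • y i‖ := by
    intro i a
    have := (L1R.single (hmem i)).smul (a * ‖y i‖)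
    rw [mul_smul, ← hyu] at this
    refine this.mono (le_of_eq ?_)
    rw [← Real.norm_eq_abs, ← norm_smul, mul_smul, ← hyu]
  have repu : ∀ i, y i ≠ 0 → L1R SS (u i) 1 := fun i h => by
    have := L1R.single (hmem i)
    rwa [hnu i h] at this
  have main : ∀ i j, y i ≠ 0 → y j ≠ 0 → ∀ a b : ℝ, 0 ≤ a →
      L1R SS (a • u i + b • u j) (7 * ‖a • u i + b • u j‖) := by
    intro i j hi hj a b ha
    rcases le_total 0 b with hb | hb
    · have hneg : L1R SS (-u j) 1 := by
        have := (repu j hj).smul (-1)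
        simpa using this
      have := two_rep (S := SS) (hnu i hi) (w := -u j) (by rw [norm_neg]; exact hnu j hj)
        (repu i hi) hneg ((r2 i j).subset hs2) ha hb
      rwa [smul_neg, sub_neg_eq_add] at this
    · have := two_rep (S := SS) (hnu i hi) (hnu j hj) (repu i hi) (repu j hj)
        ((r1 i j).subset hs1) ha (neg_nonneg.2 hb)
      rwa [neg_smul, sub_neg_eq_add] at this
  refine ⟨SS, ?_, ?_, ?_⟩
  · intro d hd
    rcases Finset.mem_union.1 hd with h | h
    · obtain ⟨i, -, rfl⟩ := Finset.mem_image.1 h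
      exact ⟨i, i, hus i i⟩
    rcases Finset.mem_union.1 h with h | h
    · obtain ⟨i, j, rfl⟩ := m1 d h
      exact ⟨i, j, Submodule.sub_mem _ (hus i j) (hus' i j)⟩
    · obtain ⟨i, j, rfl⟩ := m2 d h
      exact ⟨i, j, Submodule.sub_mem _ (hus i j) (Submodule.neg_mem _ (hus' i j))⟩
  · intro i j a b
    by_cases hi : y i = 0
    · rw [hi, smul_zero, zero_add]
      exact (single j b).mono (by linarith [norm_nonneg (b • y j)])
    by_cases hj : y j = 0
    · rw [hj, smul_zero, add_zero]
      exact (single i a).mono (by linarith [norm_nonneg (a • y i)])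
    have e : a • y i + b • y j = (a * ‖y i‖) • u i + (b * ‖y j‖) • u j := by
      rw [mul_smul, mul_smul, ← hyu, ← hyu]
    rw [e]
    rcases le_total 0 a with ha | ha
    · exact main i j hi hj _ _ (by positivity)
    · have := (main i j hi hj (-(a * ‖y i‖)) (-(b * ‖y j‖))
        (by nlinarith [norm_nonneg (y i)])).smul (-1)
      have e3 : (-(a * ‖y i‖)) • u i + (-(b * ‖y j‖)) • u j =
          -((a * ‖y i‖) • u i + (b * ‖y j‖) • u j) := by module
      rw [e3, norm_neg, smul_neg, neg_smul, one_smul, neg_neg, abs_neg, abs_one, one_mul] at this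
      exact this
  · have hc : SS.card ≤ n + (S1.card + S2.card) := by
      refine (Finset.card_union_le _ _).trans ?_
      refine add_le_add ?_ (Finset.card_union_le _ _)
      exact Finset.card_image_le.trans (by simp)
    have hcR : (SS.card : ℝ) ≤ n + (S1.card + S2.card) := by exact_mod_cast hc
    linarith

/-- Dictionary for a fixed subspace `K` plus two-term combinations. -/
lemma exists_local_dict [FiniteDimensional ℝ H] {n : ℕ} (x : Fin n → H) (K : Submodule ℝ H) :
    ∃ S : Finset H, (∀ d ∈ S, d ∈ K ∨ ∃ i j, d ∈ K ⊔ Submodule.span ℝ {x i, x j}) ∧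
      (∀ i j, ∀ v ∈ K ⊔ Submodule.span ℝ {x i, x j},
        L1R S v ((Module.finrank ℝ K + 7) * ‖v‖)) ∧
      (S.card : ℝ) ≤ Module.finrank ℝ K + (n + 4 * (n * Real.sqrt n)) := by
  classical
  obtain ⟨S, m, r, c⟩ := exists_pair_dict fun i => Kᗮ.starProjection (x i)
  set b := stdOrthonormalBasis ℝ K with hb
  set B : Finset H := Finset.univ.image (fun i => (b i : H)) with hB
  have hproj : ∀ w : H, Kᗮ.starProjection w = w - K.starProjection w := fun w => by
    rw [eq_sub_iff_add_eq, add_comm, K.starProjection_add_starProjection_orthogonal]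
  refine ⟨B ∪ S, ?_, ?_, ?_⟩
  · intro d hd
    rcases Finset.mem_union.1 hd with h | h
    · obtain ⟨i, -, rfl⟩ := Finset.mem_image.1 h
      exact Or.inl (b i).2
    · obtain ⟨i, j, hij⟩ := m d h
      refine Or.inr ⟨i, j, ?_⟩
      refine (Submodule.span_le.2 ?_ : _ ≤ K ⊔ Submodule.span ℝ {x i, x j}) hij
      have aux : ∀ w ∈ Submodule.span ℝ {x i, x j},
          Kᗮ.starProjection w ∈ K ⊔ Submodule.span ℝ {x i, x j} := by
        intro w hw
        rw [hproj]
        exact Submodule.sub_mem _ (Submodule.mem_sup_right hw)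
          (Submodule.mem_sup_left (K.starProjection_apply_mem w))
      rintro d (rfl | rfl)
      · exact aux _ (Submodule.subset_span (by simp))
      · exact aux _ (Submodule.subset_span (by simp))
  · intro i j v hv
    obtain ⟨p, hp, q, hq, rfl⟩ := Submodule.mem_sup.1 hv
    obtain ⟨a, a', rfl⟩ := Submodule.mem_span_pair.1 hq
    set v := p + (a • x i + a' • x j) with hvdef
    have h2 : Kᗮ.starProjection v =
        a • Kᗮ.starProjection (x i) + a' • Kᗮ.starProjection (x j) := by
      rw [hvdef, map_add, map_add, map_smul, map_smul]
      have : Kᗮ.starProjection p = 0 := by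
        rw [hproj, Submodule.starProjection_eq_self_iff.2 hp, sub_self]
      rw [this, zero_add]
    have h3 := ((r i j a a').subset (Finset.subset_union_right (s₁ := B)))
    rw [← h2] at h3
    have h4 : L1R (B ∪ S) (K.starProjection v) (Module.finrank ℝ K * ‖v‖) := by
      set z : K := ⟨K.starProjection v, K.starProjection_apply_mem v⟩ with hz
      have hzv : ‖z‖ ≤ ‖v‖ := K.norm_starProjection_apply_le v
      have e : K.starProjection v = ∑ i, (inner ℝ (b i) z : ℝ) • (b i : H) := by
        have := congrArg (Subtype.val) (b.sum_repr' z)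
        simpa using this.symm
      rw [e]
      have := L1R.sum (S := B ∪ S) Finset.univ (v := fun i => (inner ℝ (b i) z : ℝ) • (b i : H))
        (b := fun _ => ‖v‖) (fun i _ => by
          have hm : (b i : H) ∈ B ∪ S :=
            Finset.mem_union_left _ (Finset.mem_image_of_mem (fun i => (b i : H))
              (Finset.mem_univ i))
          have hn : ‖(b i : H)‖ = 1 := b.orthonormal.1 i
          refine ((L1R.single hm).smul _).mono ?_
          rw [hn, mul_one]
          refine (abs_real_inner_le_norm _ _).trans ?_
          rw [b.orthonormal.1 i, one_mul]
          exact hzv)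
      simpa using this
    have h5 := h4.add h3
    rw [K.starProjection_add_starProjection_orthogonal] at h5
    refine h5.mono ?_
    have := Kᗮ.norm_starProjection_apply_le v
    linarith
  · have hc : (B ∪ S).card ≤ Module.finrank ℝ K + S.card := by
      refine (Finset.card_union_le _ _).trans ?_
      refine add_le_add_left ?_ _
      exact Finset.card_image_le.trans (by simp)
    have hcR : ((B ∪ S).card : ℝ) ≤ Module.finrank ℝ K + S.card := by exact_mod_cast hc
    linarith

/-- The global dictionary. -/
lemma exists_global_dict [FiniteDimensional ℝ H] {n : ℕ} (hn : 0 < n) (x : Fin n → H)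
    (hfr : Module.finrank ℝ H ≤ n) (k : ℕ) :
    ∃ S : Finset H,
      (∀ d ∈ S, ∃ g : Fin (k + 2) → Fin n, d ∈ Submodule.span ℝ (Set.range fun l => x (g l))) ∧
      (∀ g : Fin (k + 2) → Fin n, ∀ v ∈ Submodule.span ℝ (Set.range fun l => x (g l)),
        L1R S v ((k + 7) * ‖v‖)) ∧
      (S.card : ℝ) ≤ n ^ k * (6 * (n * Real.sqrt n)) := by
  classical
  have hspan : ∀ (T : Fin k → Fin n) (i j : Fin n),
      Submodule.span ℝ (Set.range fun l => x (T l)) ⊔ Submodule.span ℝ {x i, x j} =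
      Submodule.span ℝ (Set.range fun l => x ((Fin.cons i (Fin.cons j T) :
        Fin (k + 2) → Fin n) l)) := by
    intro T i j
    rw [← Submodule.span_union]
    congr 1
    ext z
    simp only [Set.mem_union, Set.mem_range, Set.mem_insert_iff, Set.mem_singleton_iff,
      Fin.exists_fin_succ, Fin.cons_zero, Fin.cons_succ]
    grind
  choose S m r c using fun T : Fin k → Fin n =>
    exists_local_dict x (Submodule.span ℝ (Set.range fun l => x (T l)))
  have hk : ∀ T : Fin k → Fin n,
      Module.finrank ℝ (Submodule.span ℝ (Set.range fun l => x (T l))) ≤ k := fun T => by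
    have := finrank_range_le_card (R := ℝ) (fun l => x (T l))
    simpa [Set.finrank] using this
  refine ⟨Finset.univ.biUnion S, ?_, ?_, ?_⟩
  · intro d hd
    obtain ⟨T, -, hT⟩ := Finset.mem_biUnion.1 hd
    rcases m T d hT with h | ⟨i, j, h⟩
    · refine ⟨Fin.cons ⟨0, hn⟩ (Fin.cons ⟨0, hn⟩ T), ?_⟩
      rw [← hspan]
      exact Submodule.mem_sup_left h
    · refine ⟨Fin.cons i (Fin.cons j T), ?_⟩
      rwa [← hspan]
  · intro g v hv
    have hg : g = Fin.cons (g 0) (Fin.cons (g 1) (fun l => g l.succ.succ)) := by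
      funext l
      refine Fin.cases ?_ (fun l => Fin.cases ?_ (fun l => ?_) l) l <;> simp
    rw [hg, ← hspan] at hv
    refine ((r _ _ _ v hv).subset (Finset.subset_biUnion_of_mem S (Finset.mem_univ _))).mono ?_
    have : (Module.finrank ℝ (Submodule.span ℝ (Set.range fun l : Fin k => x (g l.succ.succ))) : ℝ)
      ≤ k := by exact_mod_cast hk _
    gcongr
  · have h1 : (1 : ℝ) ≤ Real.sqrt n := Real.one_le_sqrt.2 (by exact_mod_cast hn)
    have hS : ∀ T, ((S T).card : ℝ) ≤ 6 * (n * Real.sqrt n) := by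
      intro T
      have h2 : (Module.finrank ℝ (Submodule.span ℝ (Set.range fun l => x (T l))) : ℝ) ≤ n := by
        exact_mod_cast (Submodule.finrank_le _).trans hfr
      have := c T
      have h3 : (0 : ℝ) ≤ n := by positivity
      nlinarith
    have h4 : ((Finset.univ.biUnion S).card : ℝ) ≤ ∑ T, ((S T).card : ℝ) := by
      exact_mod_cast Finset.card_biUnion_le
    refine h4.trans ((Finset.sum_le_sum fun T _ => hS T).trans ?_)
    simp

end RepSection

lemma exists_cover {n t : ℕ} (hn : 0 < n) (s : Finset (Fin n)) (hs : s.card ≤ t) :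
    ∃ g : Fin t → Fin n, ∀ i ∈ s, ∃ l, g l = i := by
  refine ⟨fun l => if h : l.1 < s.card then (s.equivFin.symm ⟨l.1, h⟩ : Fin n) else ⟨0, hn⟩, ?_⟩
  intro i hi
  refine ⟨⟨(s.equivFin ⟨i, hi⟩).1, (s.equivFin ⟨i, hi⟩).2.trans_le hs⟩, ?_⟩
  simp

open scoped MatrixOrder Matrix.Norms.L2Operator in
lemma exists_isometry {n : ℕ} (A : Matrix (Fin n) (Fin n) ℝ) (hA : A.PosDef) :
    ∃ L : (Fin n → ℝ) ≃ₗ[ℝ] EuclideanSpace ℝ (Fin n), ∀ v, ‖L v‖ = normSigma A v := by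
  classical
  obtain ⟨Y, hY, rfl⟩ := CStarAlgebra.isStrictlyPositive_iff_eq_star_mul_self.mp
    hA.isStrictlyPositive
  refine ⟨(Matrix.toLinearEquiv' Y hY.invertible).trans (WithLp.linearEquiv 2 ℝ _).symm, ?_⟩
  intro v
  have e : ((Matrix.toLinearEquiv' Y hY.invertible).trans (WithLp.linearEquiv 2 ℝ _).symm) v =
    WithLp.toLp 2 (Y *ᵥ v) := rfl
  rw [e, EuclideanSpace.norm_eq, normSigma, innerSigma, ← Matrix.mulVec_mulVec,
    Matrix.dotProduct_mulVec, Matrix.star_eq_conjTranspose,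
    Matrix.conjTranspose_eq_transpose_of_trivial, Matrix.vecMul_transpose]
  congr 1
  simp [dotProduct, pow_two]

/-- every positive definite Σ has a (t, C t^{3/2} log n)-ℓ1-representation
of size at most C n^{t-1/2}, all of whose elements are t-sparse. -/
theorem stmt19 : ∃ C : ℝ, 0 < C ∧ ∀ (n t : ℕ), 2 ≤ n → 2 ≤ t →
    ∀ A : Matrix (Fin n) (Fin n) ℝ, A.PosDef →
      ∃ (N : ℕ) (D : Fin N → Fin n → ℝ),
        IsL1Rep t (C * (t : ℝ) ^ ((3 : ℝ) / 2) * Real.log n) A D ∧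
          (N : ℝ) ≤ C * (n : ℝ) ^ ((t : ℝ) - 1 / 2) ∧ ∀ i, SparseVec t (D i) := by
  classical
  refine ⟨8, by norm_num, ?_⟩
  intro n t hn ht A hA
  obtain ⟨k, rfl⟩ := Nat.exists_eq_add_of_le' ht
  obtain ⟨L, hL⟩ := exists_isometry A hA
  have hn0 : 0 < n := by omega
  set x : Fin n → EuclideanSpace ℝ (Fin n) := fun i => L (Pi.single i 1) with hx
  obtain ⟨S, m, r, c⟩ := exists_global_dict hn0 x (by simp) k
  refine ⟨S.card, fun i => L.symm (S.equivFin.symm i), ?_, ?_, ?_⟩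
  · intro v hv
    obtain ⟨g, hg⟩ := exists_cover hn0 (Finset.univ.filter fun i => v i ≠ 0) (t := k + 2) (by
      unfold SparseVec at hv
      rw [Set.ncard_eq_toFinset_card'] at hv
      convert hv using 2
      ext; simp)
    have hmem : L v ∈ Submodule.span ℝ (Set.range fun l => x (g l)) := by
      have e : v = ∑ i, v i • (Pi.single i 1 : Fin n → ℝ) := by
        simpa using (pi_eq_sum_univ' v)
      rw [e, map_sum]
      refine Submodule.sum_mem _ fun i _ => ?_
      rw [map_smul]
      by_cases hi : v i = 0
      · simp [hi]
      · obtain ⟨l, rfl⟩ := hg i (by simp [hi])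
        exact Submodule.smul_mem _ _ (Submodule.subset_span ⟨l, rfl⟩)
    obtain ⟨a, ha, hb⟩ := r g _ hmem
    refine ⟨fun i => a (S.equivFin.symm i), ?_, ?_⟩
    · apply L.injective
      rw [ha, map_sum, ← Finset.sum_coe_sort]
      rw [← S.equivFin.symm.sum_comp]
      simp
    · have e : ∑ i, |a (S.equivFin.symm i)| * normSigma A (L.symm (S.equivFin.symm i)) =
          ∑ d ∈ S, |a d| * ‖d‖ := by
        rw [← Finset.sum_coe_sort S, ← S.equivFin.symm.sum_comp]
        simp [← hL]
      rw [e, ← hL]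
      refine hb.trans ?_
      refine mul_le_mul_of_nonneg_right ?_ (norm_nonneg _)
      have h1 : (1 / 2 : ℝ) ≤ Real.log n := by
        have h2 := Real.log_two_gt_d9
        have h3 : Real.log 2 ≤ Real.log n := Real.log_le_log (by norm_num) (by exact_mod_cast hn)
        linarith
      have h4 : ((k + 2 : ℕ) : ℝ) ≤ ((k + 2 : ℕ) : ℝ) ^ ((3 : ℝ) / 2) := by
        conv_lhs => rw [← Real.rpow_one ((k + 2 : ℕ) : ℝ)]
        exact Real.rpow_le_rpow_of_exponent_le (by push_cast; linarith [k.cast_nonneg (α := ℝ)])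
          (by norm_num)
      have h5 : (0 : ℝ) ≤ k := k.cast_nonneg
      push_cast at h4 ⊢
      nlinarith
  · refine c.trans ?_
    have hnR : (0 : ℝ) < n := by exact_mod_cast hn0
    have e : (n : ℝ) ^ (((k + 2 : ℕ) : ℝ) - 1 / 2) = n ^ k * (n * Real.sqrt n) := by
      rw [Real.sqrt_eq_rpow, ← Real.rpow_natCast]
      nth_rewrite 3 [← Real.rpow_one (n : ℝ)]
      rw [← Real.rpow_add hnR, ← Real.rpow_add hnR]
      congr 1
      push_cast; ring
    rw [e]
    have : (0 : ℝ) ≤ n ^ k * (n * Real.sqrt n) := by positivity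
    linarith
  · intro i
    beta_reduce
    obtain ⟨g, hg⟩ := m _ (S.equivFin.symm i).2
    generalize (S.equivFin.symm i : EuclideanSpace ℝ (Fin n)) = d at hg ⊢
    have hsupp : ∀ j, (∀ l, g l ≠ j) → L.symm d j = 0 := by
      intro j hj
      induction hg using Submodule.span_induction with
      | mem y hy =>
        obtain ⟨l, rfl⟩ := hy
        simp [hx, (hj l).symm]
      | zero => simp
      | add y z _ _ h1 h2 => simp [h1, h2]
      | smul a y _ h1 => simp [h1]
    unfold SparseVec
    have hsub : {j | L.symm d j ≠ 0} ⊆ Set.range g := by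
      intro j hj
      by_contra hcon
      exact hj (hsupp j fun l hl => hcon ⟨l, hl⟩)
    refine (Set.ncard_le_ncard hsub (Set.toFinite _)).trans ?_
    rw [← Set.image_univ]
    refine (Set.ncard_image_le (Set.toFinite _)).trans ?_
    simp [Set.ncard_univ]
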